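/- Let n ≥ 1 be an integer, let m_1, …, m_{2n} be positive integers, and write the type-m matrix P(m) = !![a,b;c,d]. Then the integer part ⌊(d − 1)/c⌋ equals m_1. -/

import Mathlib

/-!
Multiplying `!![a, b; c, d]` on the left by `T ^ p * U ^ q` adds `q` times the second row to the
first and then `p` times the first row to the second. Hence, with `k = m 1`, the inequalities
`0 ≤ b - k * a ≤ a` and `1 ≤ d - k * c ≤ c` are preserved, since they are closed under adding rows
with nonnegative coefficients. They hold for `T ^ m 2 * U ^ m 1`, whose rows are `(1, k)` and
`(m 2, 1 + k * m 2)`, so by induction they hold for `typeM n m`. The second one says precisely that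
`k ≤ (d - 1) / c < k + 1`.
-/

open Matrix

/-- The matrix `T = !![1,0;1,1]` acting on the numerical Grothendieck group. -/
def Tmat : Matrix (Fin 2) (Fin 2) ℤ := !![1, 0; 1, 1]

/-- The matrix `U = !![1,1;0,1]`. -/
def Umat : Matrix (Fin 2) (Fin 2) ℤ := !![1, 1; 0, 1]

/-- The type-`m` matrix
`P(m) = T^{m_{2n}} * U^{m_{2n-1}} * T^{m_{2n-2}} * U^{m_{2n-3}} * ⋯ * T^{m_2} * U^{m_1}`. -/
def typeM (n : ℕ) (m : ℕ → ℕ) : Matrix (Fin 2) (Fin 2) ℤ :=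
  ((List.range n).map (fun i => Tmat ^ m (2 * (n - i)) * Umat ^ m (2 * (n - i) - 1))).prod

lemma Tmat_pow (p : ℕ) : Tmat ^ p = !![1, 0; (p : ℤ), 1] := by
  induction p with
  | zero => simp [Matrix.one_fin_two]
  | succ p ih => rw [pow_succ, ih]; simp [Tmat]

lemma Umat_pow (q : ℕ) : Umat ^ q = !![1, (q : ℤ); 0, 1] := by
  induction q with
  | zero => simp [Matrix.one_fin_two]
  | succ q ih => rw [pow_succ, ih]; simp [Umat, add_comm]

lemma typeM_succ (n : ℕ) (m : ℕ → ℕ) :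
    typeM (n + 1) m = Tmat ^ m (2 * n + 2) * Umat ^ m (2 * n + 1) * typeM n m := by
  simp only [typeM, List.range_succ_eq_map, List.map_cons, List.map_map, List.prod_cons]
  congr 3
  funext i
  simp [Function.comp]

/-- The row inequalities of `typeM (n + 1) m`, stable under left multiplication by
`T ^ p * U ^ q`. -/
lemma typeM_row_bounds (m : ℕ → ℕ) (h2 : 0 < m 2) (n : ℕ) :
    (0 ≤ typeM (n + 1) m 0 1 - m 1 * typeM (n + 1) m 0 0 ∧
      typeM (n + 1) m 0 1 - m 1 * typeM (n + 1) m 0 0 ≤ typeM (n + 1) m 0 0) ∧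
    (1 ≤ typeM (n + 1) m 1 1 - m 1 * typeM (n + 1) m 1 0 ∧
      typeM (n + 1) m 1 1 - m 1 * typeM (n + 1) m 1 0 ≤ typeM (n + 1) m 1 0) := by
  induction n with
  | zero =>
    have h2' : (1 : ℤ) ≤ m 2 := by exact_mod_cast h2
    have h : typeM (0 + 1) m = !![1, (m 1 : ℤ); (m 2 : ℤ), m 2 * m 1 + 1] := by
      rw [typeM_succ, Tmat_pow, Umat_pow]
      simp [typeM]
    rw [h]
    simp only [Matrix.of_apply, Matrix.cons_val', Matrix.cons_val_zero, Matrix.cons_val_one,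
      Matrix.cons_val_fin_one]
    refine ⟨⟨?_, ?_⟩, ?_, ?_⟩ <;> linarith
  | succ n ih =>
    rw [typeM_succ (n + 1), Tmat_pow, Umat_pow]
    generalize typeM (n + 1) m = A at ih ⊢
    obtain ⟨⟨h1, h2⟩, h3, h4⟩ := ih
    generalize m (2 * (n + 1) + 2) = p
    generalize m (2 * (n + 1) + 1) = q
    have hp : (0 : ℤ) ≤ p := Int.natCast_nonneg p
    have hq : (0 : ℤ) ≤ q := Int.natCast_nonneg q
    simp only [Matrix.mul_apply, Fin.sum_univ_two, Matrix.of_apply, Matrix.cons_val',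
      Matrix.cons_val_zero, Matrix.cons_val_one, Matrix.cons_val_fin_one]
    have e1 := mul_nonneg hq (by linarith : 0 ≤ A 1 1 - m 1 * A 1 0)
    have e2 := mul_nonneg hq (sub_nonneg.2 h4)
    have e3 := mul_nonneg hp (add_nonneg h1 e1)
    have e4 := mul_nonneg hp (add_nonneg (sub_nonneg.2 h2) e2)
    refine ⟨⟨?_, ?_⟩, ?_, ?_⟩ <;> linarith

theorem typeM_floor_eq (n : ℕ) (hn : 1 ≤ n) (m : ℕ → ℕ)
    (hm : ∀ i, 1 ≤ i → i ≤ 2 * n → 0 < m i) :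
    ⌊((typeM n m 1 1 : ℚ) - 1) / (typeM n m 1 0 : ℚ)⌋ = (m 1 : ℤ) := by
  obtain ⟨k, rfl⟩ : ∃ k, n = k + 1 := ⟨n - 1, by omega⟩
  obtain ⟨-, h3, h4⟩ := typeM_row_bounds m (hm 2 (by omega) (by omega)) k
  generalize typeM (k + 1) m 1 1 = d at *
  generalize typeM (k + 1) m 1 0 = c at *
  have hc : (0 : ℚ) < c := by exact_mod_cast (by linarith : 0 < c)
  have h3' : (1 : ℚ) ≤ d - m 1 * c := by exact_mod_cast h3
  have h4' : (d : ℚ) - m 1 * c ≤ c := by exact_mod_cast h4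
  rw [Int.floor_eq_iff, le_div_iff₀ hc, div_lt_iff₀ hc]
  push_cast
  constructor <;> linarith
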